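/- Let q be a prime power, r ≥ 2, s ≥ 2, n ≥ 3s with (n,s) ≠ (6,2), and let #Q_{r,n,s}(F_q) denote the number of s-powerful monic polynomials in F_q[x_1,…,x_r] of total degree n. Then |#Q_{r,n,s}(F_q) − η_{r,n,s}(q)| ≤ η_{r,n,s}(q) · 6·q^{−δ}, where δ = binom(r+n−s,r) − binom(r+n−2s,r) − r(r+1)/2. -/

import Mathlib

open MvPolynomial

/-- The key of a monomial in the degree-lexicographic order: first total degree, then
lexicographic comparison of exponent vectors. -/
noncomputable def degLexKey {r : ℕ} (m : Fin r →₀ ℕ) : Lex (ℕ × Lex (Fin r →₀ ℕ)) :=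
  toLex (m.sum fun _ e => e, toLex m)

/-- A multivariate polynomial is monic if the coefficient of its deg-lex leading monomial is 1. -/
def MvMonic {r : ℕ} {F : Type*} [CommSemiring F] (f : MvPolynomial (Fin r) F) : Prop :=
  ∃ m ∈ f.support, (∀ m' ∈ f.support, degLexKey m' ≤ degLexKey m) ∧ f.coeff m = 1

/-- The number of `s`-powerful monic `r`-variate polynomials of total degree `n` over `F`:
those divisible by the `s`-th power of some nonconstant polynomial. -/
noncomputable def Qcount (F : Type) [Field F] (r n s : ℕ) : ℕ :=
  Set.ncard {f : MvPolynomial (Fin r) F | f.totalDegree = n ∧ MvMonic f ∧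
    ∃ g : MvPolynomial (Fin r) F, 0 < g.totalDegree ∧ g ^ s ∣ f}

noncomputable def eta (q r n s : ℕ) : ℚ :=
  (q : ℚ) ^ (Nat.choose (r + n - s) r + r - 1) * (1 - ((q : ℚ)⁻¹) ^ r) *
    (1 - ((q : ℚ)⁻¹) ^ (Nat.choose (r + n - s - 1) (r - 1))) / (1 - (q : ℚ)⁻¹) ^ 2

/-- the set of monic polynomials of given total degree -/
def Mset (F : Type) [Field F] (r m : ℕ) : Set (MvPolynomial (Fin r) F) :=
  {f | f.totalDegree = m ∧ MvMonic f}

theorem degLexKey_le {r : ℕ} (a b : Fin r →₀ ℕ) :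
    degLexKey a ≤ degLexKey b ↔
      MonomialOrder.degLex.toSyn a ≤ MonomialOrder.degLex.toSyn b := by
  have : (MonomialOrder.degLex.toSyn a ≤ MonomialOrder.degLex.toSyn b) ↔
    toDegLex a ≤ toDegLex b := Iff.rfl
  rw [this, Finsupp.DegLex.le_iff]
  unfold degLexKey
  rw [Prod.Lex.toLex_le_toLex]
  rfl

theorem mvMonic_iff {F : Type} [Field F] {r : ℕ} (f : MvPolynomial (Fin r) F) :
    MvMonic f ↔ MonomialOrder.degLex.Monic f := by
  constructor
  · rintro ⟨m, hm, hmax, h1⟩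
    have hf : f ≠ 0 := by rintro rfl; simp at hm
    have h2 := (degLexKey_le _ _).1 (hmax _ (MonomialOrder.degLex.degree_mem_support hf))
    have h3 := MonomialOrder.degLex.le_degree hm
    have h4 : m = MonomialOrder.degLex.degree f :=
      MonomialOrder.degLex.toSyn.injective (le_antisymm h3 h2)
    rw [h4] at h1
    exact h1
  · intro h
    have hf : f ≠ 0 := h.ne_zero
    exact ⟨_, MonomialOrder.degLex.degree_mem_support hf,
      fun m' hm' => (degLexKey_le _ _).2 (MonomialOrder.degLex.le_degree hm'), h⟩

theorem card_low (F : Type) [Field F] [Fintype F] (r m : ℕ) :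
    {p : MvPolynomial (Fin r) F | p.totalDegree ≤ m}.Finite ∧
    {p : MvPolynomial (Fin r) F | p.totalDegree ≤ m}.ncard
      = Fintype.card F ^ (Nat.choose (r + m) r) := by
  have hset : {p : MvPolynomial (Fin r) F | p.totalDegree ≤ m} =
      (restrictTotalDegree (Fin r) F m : Set _) := by
    ext p; simp [mem_restrictTotalDegree]
  have hfin : Finite (restrictTotalDegree (Fin r) F m) := Module.finite_of_finite F
  have hS : {n : Fin r →₀ ℕ | (n.sum fun _ e => e) ≤ m} =
      (((Finset.range (m+1)).biUnion fun j => Finset.finsuppAntidiag Finset.univ j :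
        Finset (Fin r →₀ ℕ)) : Set (Fin r →₀ ℕ)) := by
    ext n
    simp [Finsupp.sum_fintype]
  have hcard : Nat.card {n : Fin r →₀ ℕ | (n.sum fun _ e => e) ≤ m} = Nat.choose (r+m) r := by
    rw [hS, Nat.card_coe_set_eq, Set.ncard_coe_finset, Finset.card_biUnion]
    · simp [Finset.card_finsuppAntidiag_nat_eq_multichoose, Nat.sum_range_multichoose, add_comm]
    · intro i _ j _ hij
      refine Finset.disjoint_left.2 ?_
      intro a ha hb
      simp at ha hb
      omega
  have hfr : Module.finrank F (restrictTotalDegree (Fin r) F m) = Nat.choose (r+m) r := by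
    rw [← hcard]
    exact Module.finrank_eq_nat_card_basis (basisRestrictSupport F _)
  rw [hset]
  refine ⟨Set.toFinite _, ?_⟩
  have : Fintype (restrictTotalDegree (Fin r) F m) := Fintype.ofFinite _
  rw [← Nat.card_coe_set_eq]
  change Nat.card (restrictTotalDegree (Fin r) F m) = _
  rw [Nat.card_eq_fintype_card, Module.card_eq_pow_finrank (K := F), hfr]

theorem card_low' (F : Type) [Field F] [Fintype F] (r m : ℕ) (hr : 1 ≤ r) :
    {p : MvPolynomial (Fin r) F | p = 0 ∨ p.totalDegree < m}.Finite ∧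
    {p : MvPolynomial (Fin r) F | p = 0 ∨ p.totalDegree < m}.ncard
      = Fintype.card F ^ (Nat.choose (r + m - 1) r) := by
  rcases m with _ | m
  · have : {p : MvPolynomial (Fin r) F | p = 0 ∨ p.totalDegree < 0} = {0} := by ext; simp
    rw [this, Nat.choose_eq_zero_of_lt (by omega)]
    simp
  · have : {p : MvPolynomial (Fin r) F | p = 0 ∨ p.totalDegree < m + 1} =
      {p : MvPolynomial (Fin r) F | p.totalDegree ≤ m} := by
      ext p
      simp only [Set.mem_ofPred_eq, Nat.lt_succ_iff]
      constructor
      · rintro (rfl | h)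
        · simp
        · exact h
      · exact Or.inr
    rw [this]
    exact card_low F r m

theorem Mset_finite (F : Type) [Field F] [Fintype F] (r m : ℕ) : (Mset F r m).Finite :=
  (card_low F r m).1.subset fun _ hf => hf.1.le

theorem leadingCoeff_Cmul {F : Type} [Field F] {r : ℕ} (c : F) (f : MvPolynomial (Fin r) F) :
    MonomialOrder.degLex.leadingCoeff (C c * f) = c * MonomialOrder.degLex.leadingCoeff f := by
  rw [MonomialOrder.leadingCoeff_mul, MonomialOrder.leadingCoeff_C]

theorem totalDegree_Cmul {F : Type} [Field F] {r : ℕ} (c : F) (hc : c ≠ 0)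
    (f : MvPolynomial (Fin r) F) : (C c * f).totalDegree = f.totalDegree := by
  by_cases hf : f = 0
  · simp [hf]
  · rw [totalDegree_mul_of_isDomain (by simpa using hc) hf]; simp

/-- Every nonzero polynomial has a monic scalar multiple. -/
theorem exists_monic {F : Type} [Field F] {r : ℕ} (f : MvPolynomial (Fin r) F) (hf : f ≠ 0) :
    ∃ c : F, c ≠ 0 ∧ ∃ g, MvMonic g ∧ g.totalDegree = f.totalDegree ∧ f = C c * g := by
  have hc : MonomialOrder.degLex.leadingCoeff f ≠ 0 :=
    MonomialOrder.degLex.leadingCoeff_ne_zero_iff.2 hf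
  refine ⟨_, hc, C (MonomialOrder.degLex.leadingCoeff f)⁻¹ * f, ?_, ?_, ?_⟩
  · rw [mvMonic_iff, MonomialOrder.Monic, leadingCoeff_Cmul]
    exact inv_mul_cancel₀ hc
  · exact totalDegree_Cmul _ (inv_ne_zero hc) _
  · rw [← mul_assoc, ← C_mul, mul_inv_cancel₀ hc]; simp

theorem MvMonic.ne_zero' {F : Type} [Field F] {r : ℕ} {f : MvPolynomial (Fin r) F}
    (hf : MvMonic f) : f ≠ 0 := ((mvMonic_iff f).1 hf).ne_zero

theorem monic_unique {F : Type} [Field F] {r : ℕ} {f g : MvPolynomial (Fin r) F}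
    (hf : MvMonic f) (hg : MvMonic g) {c d : F} (h : C c * f = C d * g) (hc : c ≠ 0) :
    c = d ∧ f = g := by
  have h1 := congrArg MonomialOrder.degLex.leadingCoeff h
  rw [mvMonic_iff, MonomialOrder.Monic] at hf hg
  rw [leadingCoeff_Cmul, leadingCoeff_Cmul, hf, hg, mul_one, mul_one] at h1
  subst h1
  refine ⟨rfl, mul_left_cancel₀ ?_ h⟩
  simpa using hc

theorem card_Mset (F : Type) [Field F] [Fintype F] (r m : ℕ) (hr : 1 ≤ r) :
    Fintype.card F ^ (Nat.choose (r + m - 1) r) + (Fintype.card F - 1) * (Mset F r m).ncard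
      = Fintype.card F ^ (Nat.choose (r + m) r) := by
  classical
  rw [← (card_low F r m).2, ← (card_low' F r m hr).2]
  have hcF : (Set.univ \ {0} : Set F).ncard = Fintype.card F - 1 := by
    rw [Set.ncard_sdiff_singleton_of_mem (Set.mem_univ _), Set.ncard_univ, Nat.card_eq_fintype_card]
  rw [← hcF, ← Set.ncard_prod]
  have hinj : Set.InjOn (fun x : F × MvPolynomial (Fin r) F => C x.1 * x.2)
      ((Set.univ \ {0} : Set F) ×ˢ Mset F r m) := by
    rintro ⟨c, f⟩ ⟨hc, hf⟩ ⟨d, g⟩ ⟨hd, hg⟩ h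
    have := monic_unique hf.2 hg.2 h (by simpa using hc)
    exact Prod.ext this.1 this.2
  rw [← Set.InjOn.ncard_image hinj, ← Set.ncard_union_eq _ (card_low' F r m hr).1
    (((Set.toFinite _).prod (Mset_finite F r m)).image _)]
  · congr 1
    ext f
    simp only [Set.mem_union, Set.mem_ofPred_eq, Set.mem_image, Set.mem_prod, Prod.exists]
    constructor
    · rintro ((rfl | h) | ⟨c, g, ⟨hc, hg⟩, rfl⟩)
      · simp
      · exact h.le
      · rw [totalDegree_Cmul _ (by simpa using hc), hg.1]
    · intro h
      by_cases h0 : f = 0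
      · simp [h0]
      rcases h.lt_or_eq with h | h
      · exact Or.inl (Or.inr h)
      · obtain ⟨c, hc, g, hg, hd, e⟩ := exists_monic f h0
        exact Or.inr ⟨c, g, ⟨by simpa using hc, hd.trans h, hg⟩, e.symm⟩
  · rw [Set.disjoint_left]
    rintro f hf ⟨⟨c, g⟩, ⟨hc, hg⟩, rfl⟩
    have hc : c ≠ 0 := by simpa using hc
    rcases hf with hf | hf
    · have := hg.2.ne_zero'
      simp_all
    · simp only [] at hf
      rw [totalDegree_Cmul _ hc, hg.1] at hf
      exact lt_irrefl _ hf

theorem totalDegree_pow_mul {F : Type} [Field F] {r : ℕ} {g h : MvPolynomial (Fin r) F}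
    (hg : g ≠ 0) (hh : h ≠ 0) (s : ℕ) :
    (g ^ s * h).totalDegree = s * g.totalDegree + h.totalDegree := by
  induction s with
  | zero => simp
  | succ s ih =>
    rw [pow_succ', mul_assoc, totalDegree_mul_of_isDomain hg (mul_ne_zero (pow_ne_zero _ hg) hh), ih]
    ring

theorem Mset_mul {F : Type} [Field F] {r a b s : ℕ} {g h : MvPolynomial (Fin r) F}
    (hg : g ∈ Mset F r a) (hh : h ∈ Mset F r b) : g ^ s * h ∈ Mset F r (s * a + b) := by
  refine ⟨?_, ?_⟩
  · rw [totalDegree_pow_mul hg.2.ne_zero' hh.2.ne_zero', hg.1, hh.1]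
  · rw [mvMonic_iff]
    exact (((mvMonic_iff g).1 hg.2).pow).mul ((mvMonic_iff h).1 hh.2)

/-- cancel a monic power divisor -/
theorem Mset_div {F : Type} [Field F] {r a s n : ℕ} {g f : MvPolynomial (Fin r) F}
    (hg : g ∈ Mset F r a) (hf : f ∈ Mset F r n) (hd : g ^ s ∣ f) :
    s * a ≤ n ∧ ∃ h ∈ Mset F r (n - s * a), f = g ^ s * h := by
  obtain ⟨h, rfl⟩ := hd
  have hh : h ≠ 0 := by
    rintro rfl
    exact hf.2.ne_zero' (by simp)
  have h1 := hf.1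
  rw [totalDegree_pow_mul hg.2.ne_zero' hh, hg.1] at h1
  refine ⟨by omega, h, ⟨by omega, ?_⟩, rfl⟩
  have h2 := (mvMonic_iff _).1 hf.2
  rw [mvMonic_iff]
  have h3 : MonomialOrder.degLex.leadingCoeff (g ^ s) = 1 := ((mvMonic_iff g).1 hg.2).pow
  rw [MonomialOrder.Monic, MonomialOrder.leadingCoeff_mul, h3, one_mul] at h2
  exact h2

theorem Q_upper (F : Type) [Field F] [Fintype F] (r n s : ℕ) (hs : 1 ≤ s) :
    Qcount F r n s ≤ ∑ k ∈ Finset.Icc 1 (n / s), (Mset F r k).ncard * (Mset F r (n - s * k)).ncard := by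
  unfold Qcount
  have hfin : ∀ k, ((fun x : MvPolynomial (Fin r) F × MvPolynomial (Fin r) F => x.1 ^ s * x.2) ''
          (Mset F r k ×ˢ Mset F r (n - s * k))).Finite := fun k =>
    ((Mset_finite F r k).prod (Mset_finite F r _)).image _
  have hsub : {f : MvPolynomial (Fin r) F | f.totalDegree = n ∧ MvMonic f ∧
      ∃ g : MvPolynomial (Fin r) F, 0 < g.totalDegree ∧ g ^ s ∣ f} ⊆
      ⋃ k ∈ Finset.Icc 1 (n / s),
        (fun x : MvPolynomial (Fin r) F × MvPolynomial (Fin r) F => x.1 ^ s * x.2) ''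
          (Mset F r k ×ˢ Mset F r (n - s * k)) := by
    rintro f ⟨h1, h2, g, hg, hd⟩
    obtain ⟨c, hc, g', hm, hdeg, rfl⟩ := exists_monic g (by rintro rfl; simp at hg)
    have hd' : g' ^ s ∣ f := by
      refine dvd_trans ?_ hd
      exact pow_dvd_pow_of_dvd (Dvd.intro_left _ rfl) _
    obtain ⟨hle, h, hh, e⟩ := Mset_div (F := F) (a := g'.totalDegree) ⟨rfl, hm⟩ ⟨h1, h2⟩ hd'
    simp only [Set.mem_iUnion]
    refine ⟨g'.totalDegree, ?_, (g', h), ⟨⟨rfl, hm⟩, hh⟩, e.symm⟩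
    rw [Finset.mem_Icc, Nat.le_div_iff_mul_le (by omega)]
    constructor
    · omega
    · rw [mul_comm]; exact hle
  refine (Set.ncard_le_ncard hsub
    (Set.Finite.biUnion (Finset.finite_toSet _) fun k _ => hfin k)).trans ?_
  refine (Finset.set_ncard_biUnion_le _ _).trans ?_
  refine Finset.sum_le_sum fun k _ => ?_
  rw [← Set.ncard_prod]
  exact Set.ncard_image_le ((Mset_finite F r k).prod (Mset_finite F r _))

theorem linear_prime {F : Type} [Field F] {r : ℕ} {g : MvPolynomial (Fin r) F}
    (hg : g ∈ Mset F r 1) : Prime g := by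
  rw [← irreducible_iff_prime]
  have unit_of : ∀ a : MvPolynomial (Fin r) F, a ≠ 0 → a.totalDegree = 0 → IsUnit a := by
    intro a ha h0
    rw [totalDegree_eq_zero_iff_eq_C.1 h0] at ha ⊢
    exact (IsUnit.mk0 _ (by simpa using ha)).map C
  constructor
  · intro hu
    obtain ⟨b, hb⟩ := isUnit_iff_exists_inv.1 hu
    have h1 := congrArg totalDegree hb
    have hb0 : b ≠ 0 := by rintro rfl; simp at hb
    rw [totalDegree_mul_of_isDomain hg.2.ne_zero' hb0, hg.1] at h1
    simp at h1
  · rintro a b rfl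
    have h0 := hg.2.ne_zero'
    have ha := left_ne_zero_of_mul h0
    have hb := right_ne_zero_of_mul h0
    have h1 := hg.1
    rw [totalDegree_mul_of_isDomain ha hb] at h1
    rcases Nat.eq_zero_or_pos a.totalDegree with h | h
    · exact Or.inl (unit_of _ ha h)
    · exact Or.inr (unit_of _ hb (by omega))

theorem linear_dvd {F : Type} [Field F] {r : ℕ} {g g' : MvPolynomial (Fin r) F}
    (hg : g ∈ Mset F r 1) (hg' : g' ∈ Mset F r 1) (h : g' ∣ g) : g' = g := by
  have h1 : g' ^ 1 ∣ g := by simpa using h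
  obtain ⟨-, k, hk, e⟩ := Mset_div hg' hg h1
  have h2 := totalDegree_eq_zero_iff_eq_C.1 (by simpa using hk.1)
  rw [h2, pow_one, mul_comm] at e
  have h3 : C 1 * g = C (coeff 0 k) * g' := by rw [← e]; simp
  exact (monic_unique hg.2 hg'.2 h3 one_ne_zero).2.symm

theorem Q_lower (F : Type) [Field F] [Fintype F] (r n s : ℕ) (hs : 1 ≤ s) (hn : 2 * s ≤ n) :
    (Mset F r 1).ncard * (Mset F r (n - s)).ncard ≤ Qcount F r n s +
      (Mset F r 1).ncard * ((Mset F r 1).ncard * (Mset F r (n - 2 * s)).ncard) := by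
  unfold Qcount
  set Q := {f : MvPolynomial (Fin r) F | f.totalDegree = n ∧ MvMonic f ∧
      ∃ g : MvPolynomial (Fin r) F, 0 < g.totalDegree ∧ g ^ s ∣ f} with hQ
  have hQfin : Q.Finite := (Mset_finite F r n).subset fun f hf => ⟨hf.1, hf.2.1⟩
  rw [← Set.ncard_prod, ← Set.ncard_prod, ← Set.ncard_prod]
  set A := Mset F r 1 ×ˢ Mset F r (n - s)
  have hAfin : A.Finite := (Mset_finite F r 1).prod (Mset_finite F r _)
  set T := Mset F r 1 ×ˢ Mset F r 1 ×ˢ Mset F r (n - 2 * s)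
  have hTfin : T.Finite :=
    (Mset_finite F r 1).prod ((Mset_finite F r 1).prod (Mset_finite F r _))
  set Good := {x ∈ A | ∀ g' ∈ Mset F r 1, g' ≠ x.1 → ¬ g' ^ s ∣ x.2} with hG
  set φ := fun x : MvPolynomial (Fin r) F × MvPolynomial (Fin r) F × MvPolynomial (Fin r) F =>
    (x.1, x.2.1 ^ s * x.2.2)
  have hcover : A ⊆ Good ∪ φ '' T := by
    rintro ⟨g, h⟩ hx
    by_cases hgood : ∀ g' ∈ Mset F r 1, g' ≠ g → ¬ g' ^ s ∣ h
    · exact Or.inl ⟨hx, hgood⟩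
    · push Not at hgood
      obtain ⟨g', hg', -, hd⟩ := hgood
      obtain ⟨hle, k, hk, e⟩ := Mset_div hg' hx.2 hd
      refine Or.inr ⟨(g, g', k), ⟨hx.1, hg', ?_⟩, ?_⟩
      · have : n - s - s * 1 = n - 2 * s := by omega
        rwa [this] at hk
      · exact Prod.ext rfl e.symm
  refine (Set.ncard_le_ncard hcover ((hAfin.subset (Set.sep_subset _ _)).union
    (hTfin.image _))).trans ?_
  refine (Set.ncard_union_le _ _).trans ?_
  refine Nat.add_le_add ?_ (Set.ncard_image_le hTfin)
  refine Set.ncard_le_ncard_of_injOn (fun x => x.1 ^ s * x.2) ?_ ?_ hQfin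
  · rintro ⟨g, h⟩ ⟨⟨hg, hh⟩, -⟩
    have := Mset_mul (s := s) hg hh
    have e : s * 1 + (n - s) = n := by omega
    rw [e] at this
    refine ⟨this.1, this.2, g, ?_, Dvd.intro _ rfl⟩
    have := hg.1
    simp only [] at this
    omega
  · rintro ⟨g, h⟩ ⟨⟨hg, hh⟩, hgood⟩ ⟨g', h'⟩ ⟨⟨hg', hh'⟩, hgood'⟩ e
    simp only [] at e hg hh hgood hg' hh'
    by_cases hgg : g' = g
    · subst hgg
      have := mul_left_cancel₀ (pow_ne_zero s hg.2.ne_zero') e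
      rw [this]
    · exfalso
      apply hgood g' hg' hgg
      have hp := linear_prime hg'
      refine hp.pow_dvd_of_dvd_mul_left s ?_ (Dvd.intro _ e.symm)
      intro hd
      exact hgg (linear_dvd hg hg' (hp.dvd_of_dvd_pow hd))

theorem choose_step (r k : ℕ) (hr : 1 ≤ r) :
    Nat.choose (r + (k + 1)) r = Nat.choose (r + k) r + Nat.choose (r + k) (r - 1) := by
  obtain ⟨t, rfl⟩ : ∃ t, r = t + 1 := ⟨r - 1, by omega⟩
  rw [show t + 1 + (k + 1) = (t + 1 + k) + 1 by ring, Nat.choose_succ_succ]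
  simp [add_comm]

theorem choose_convex (r a b d : ℕ) (hr : 1 ≤ r) (hab : b ≤ a) :
    Nat.choose (r + a) r + Nat.choose (r + (b + d)) r ≤
      Nat.choose (r + (a + d)) r + Nat.choose (r + b) r := by
  induction d with
  | zero => simp
  | succ d ih =>
    have h1 := choose_step r (a + d) hr
    have h2 := choose_step r (b + d) hr
    have h3 : Nat.choose (r + (b + d)) (r - 1) ≤ Nat.choose (r + (a + d)) (r - 1) :=
      Nat.choose_le_choose _ (by omega)
    rw [← add_assoc a, ← add_assoc b]
    omega

theorem choose_linear (r a d : ℕ) (hr : 1 ≤ r) :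
    Nat.choose (r + a) r + d ≤ Nat.choose (r + (a + d)) r := by
  induction d with
  | zero => simp
  | succ d ih =>
    have h1 := choose_step r (a + d) hr
    have h3 : 0 < Nat.choose (r + (a + d)) (r - 1) := Nat.choose_pos (by omega)
    rw [← add_assoc a]
    omega

theorem choose_at (r : ℕ) (hr : 2 ≤ r) : Nat.choose (r + 1) r = r + 1 ∧
    2 * Nat.choose (r + 2) r = r * (r + 1) + 2 * (r + 1) := by
  constructor
  · simp
  · have h := Nat.choose_symm_add (a := r) (b := 2)
    rw [h, Nat.choose_two_right, Nat.mul_div_cancel']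
    · simp; ring
    · exact (Nat.even_mul_pred_self (r + 2)).two_dvd

theorem exponent_bound (r s n k : ℕ) (hr : 2 ≤ r) (hs : 2 ≤ s) (hn : 3 * s ≤ n)
    (hns : (n, s) ≠ (6, 2)) (hk : 2 ≤ k) (hkn : s * k ≤ n) :
    Nat.choose (r + k) r + Nat.choose (r + (n - s * k)) r + k ≤
      Nat.choose (r + 2) r + Nat.choose (r + (n - 2 * s)) r + 2 := by
  rcases hk.lt_or_eq with hk | rfl
  swap
  · rw [mul_comm]
  have h2 := (choose_at r hr).2
  have h1 := (choose_at r hr).1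
  obtain ⟨j, rfl⟩ : ∃ j, k = j + 2 := ⟨k - 2, by omega⟩
  obtain ⟨a, ha⟩ : ∃ a, n = s * (j + 2) + a := ⟨n - s * (j + 2), by omega⟩
  have e1 : n - s * (j + 2) = a := by omega
  have e2 : n - 2 * s = a + s * j := by rw [ha, mul_add]; omega
  rw [e1, e2]
  have hrr : 6 ≤ r * (r + 1) := by nlinarith
  by_cases hd : j + 2 ≤ s * j
  · have hc := choose_convex r a 0 (s * j) (by omega) (by omega)
    rw [zero_add, add_zero, Nat.choose_self] at hc
    obtain ⟨d, hd'⟩ := Nat.exists_eq_add_of_le hd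
    have hl := choose_linear r (j + 2) d (by omega)
    rw [← hd'] at hl
    have : 2 * j ≤ s * j := Nat.mul_le_mul_right _ hs
    omega
  · have hj : j = 1 := by
      by_contra hj
      have : 2 * j ≤ s * j := Nat.mul_le_mul_right _ hs
      omega
    subst hj
    have hs2 : s = 2 := by omega
    subst hs2
    have ha1 : 1 ≤ a := by
      by_contra h0
      apply hns
      ext <;> simp; omega
    have hc := choose_convex r a 1 2 (by omega) ha1
    simp only [Nat.reduceAdd, Nat.reduceMul] at hc ⊢
    omega

theorem geom_bound (K : ℕ) : ∑ k ∈ Finset.Icc 2 K, (1 / 2 : ℚ) ^ (k - 2) ≤ 2 := by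
  have key : ∀ K : ℕ, ∑ k ∈ Finset.Icc 2 (K + 1), (1 / 2 : ℚ) ^ (k - 2) = 2 - 2 * (1 / 2) ^ K := by
    intro K
    induction K with
    | zero => simp
    | succ K ih =>
      rw [Finset.sum_Icc_succ_top (by omega), ih, show K + 1 + 1 - 2 = K by omega, pow_succ]
      ring
  rcases K with _ | K
  · simp
  · rw [key]
    have : (0 : ℚ) ≤ (1 / 2) ^ K := by positivity
    linarith

theorem eta_eq (q r n s N1 Nm : ℕ) (hq : 2 ≤ q) (hr : 2 ≤ r) (hs : s < n)
    (h1 : q ^ (Nat.choose (r + 1 - 1) r) + (q - 1) * N1 = q ^ (Nat.choose (r + 1) r))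
    (hm : q ^ (Nat.choose (r + (n - s) - 1) r) + (q - 1) * Nm
      = q ^ (Nat.choose (r + (n - s)) r)) :
    ((q : ℚ) - 1) ^ 2 * eta q r n s = (q : ℚ) ^ (Nat.choose (r + (n - s)) r + r + 1) *
      (1 - ((q : ℚ)⁻¹) ^ r) * (1 - ((q : ℚ)⁻¹) ^ (Nat.choose (r + n - s - 1) (r - 1))) ∧
    eta q r n s = N1 * Nm := by
  have hq0 : (q : ℚ) ≠ 0 := by positivity
  have hq1 : (q : ℚ) - 1 ≠ 0 := by
    have : (2 : ℚ) ≤ q := by exact_mod_cast hq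
    linarith
  have A : ((q : ℚ) - 1) ^ 2 * eta q r n s = (q : ℚ) ^ (Nat.choose (r + (n - s)) r + r + 1) *
      (1 - ((q : ℚ)⁻¹) ^ r) * (1 - ((q : ℚ)⁻¹) ^ (Nat.choose (r + n - s - 1) (r - 1))) := by
    unfold eta
    have e : r + n - s = r + (n - s) := by omega
    rw [e]
    set X := Nat.choose (r + (n - s)) r
    set c := Nat.choose (r + (n - s) - 1) (r - 1)
    have e3 : (1 : ℚ) - (q : ℚ)⁻¹ = (q - 1) * (q : ℚ)⁻¹ := by field_simp
    have e4 : (q : ℚ) ^ (X + r + 1) = q ^ (X + r - 1) * q ^ 2 := by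
      rw [← pow_add]; congr 1; omega
    rw [e3, e4]
    generalize (1 - ((q : ℚ)⁻¹) ^ r) = u
    generalize (1 - ((q : ℚ)⁻¹) ^ c) = v
    field_simp
  refine ⟨A, ?_⟩
  apply mul_left_cancel₀ (pow_ne_zero 2 hq1)
  rw [A]
  have e5 := choose_step r (n - s - 1) (by omega)
  rw [show n - s - 1 + 1 = n - s by omega, show r + (n - s - 1) = r + n - s - 1 by omega] at e5
  rw [show r + (n - s) - 1 = r + n - s - 1 by omega] at hm
  have hc : ((q - 1 : ℕ) : ℚ) = (q : ℚ) - 1 := by push_cast [show 1 ≤ q by omega]; ring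
  have h1' : (q : ℚ) + ((q : ℚ) - 1) * N1 = q ^ (r + 1) := by
    rw [← hc]; simp at h1; exact_mod_cast h1
  have hm' : (q : ℚ) ^ (Nat.choose (r + n - s - 1) r) + ((q : ℚ) - 1) * Nm =
      q ^ (Nat.choose (r + (n - s)) r) := by
    rw [← hc]; exact_mod_cast hm
  have : ((q : ℚ) - 1) ^ 2 * (N1 * Nm) = (((q : ℚ) - 1) * N1) * (((q : ℚ) - 1) * Nm) := by ring
  rw [this, eq_sub_of_add_eq' h1', eq_sub_of_add_eq' hm', e5]
  generalize Nat.choose (r + n - s - 1) r = d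
  generalize Nat.choose (r + n - s - 1) (r - 1) = c
  simp only [inv_pow, pow_add, pow_one]
  field_simp

theorem one_sub_inv_pow (q c : ℕ) (hq : 2 ≤ q) (hc : 2 ≤ c) : (3 / 4 : ℚ) ≤ 1 - ((q : ℚ)⁻¹) ^ c := by
  have h2 : (2 : ℚ) ≤ q := by exact_mod_cast hq
  have h0 : (0 : ℚ) ≤ (q : ℚ)⁻¹ := by positivity
  have h1 : (q : ℚ)⁻¹ ≤ 1 / 2 := by
    rw [inv_eq_one_div]; exact one_div_le_one_div_of_le (by norm_num) h2
  have : ((q : ℚ)⁻¹) ^ c ≤ ((q : ℚ)⁻¹) ^ 2 := pow_le_pow_of_le_one h0 (by linarith) hc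
  nlinarith

theorem stmt5 (q : ℕ) (F : Type) [Field F] [Fintype F] (hq : Fintype.card F = q)
    (r s n : ℕ) (hr : 2 ≤ r) (hs : 2 ≤ s) (hn : 3 * s ≤ n) (hns : (n, s) ≠ (6, 2)) :
    |(Qcount F r n s : ℚ) - eta q r n s| ≤
      eta q r n s * 6 * (q : ℚ) ^
        (-((Nat.choose (r + n - s) r : ℤ) - Nat.choose (r + n - 2 * s) r
            - r * (r + 1) / 2)) := by
  have hq2 : 2 ≤ q := by rw [← hq]; exact Fintype.one_lt_card
  have hN : ∀ k, q ^ (Nat.choose (r + k - 1) r) + (q - 1) * (Mset F r k).ncard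
      = q ^ (Nat.choose (r + k) r) := fun k => by rw [← hq]; exact card_Mset F r k (by omega)
  obtain ⟨hA, hB⟩ := eta_eq q r n s _ _ hq2 hr (by omega) (hN 1) (hN (n - s))
  have hup := Q_upper F r n s (by omega)
  have hlow := Q_lower F r n s (by omega) (by omega)
  have hq2' : (2 : ℚ) ≤ q := by exact_mod_cast hq2
  have hc : ((q - 1 : ℕ) : ℚ) = (q : ℚ) - 1 := by push_cast [show 1 ≤ q by omega]; ring
  have hNle : ∀ k, ((q : ℚ) - 1) * (Mset F r k).ncard ≤ (q : ℚ) ^ (Nat.choose (r + k) r) := by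
    intro k
    rw [← hc]
    have := hN k
    exact_mod_cast (by omega : (q - 1) * (Mset F r k).ncard ≤ q ^ (Nat.choose (r + k) r))
  generalize hNN : (fun k => (Mset F r k).ncard) = N at *
  have hNk : ∀ k, (Mset F r k).ncard = N k := fun k => by rw [← hNN]
  simp only [hNk] at *
  set D := Nat.choose (r + 2) r + Nat.choose (r + (n - 2 * s)) r with hD
  obtain ⟨c1, c2⟩ := choose_at r hr
  -- lower bound for the error term
  have hE : 3 * (q : ℚ) ^ D ≤ ((q : ℚ) - 1) ^ 2 * (eta q r n s * 6 * (q : ℚ) ^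
        (-((Nat.choose (r + n - s) r : ℤ) - Nat.choose (r + n - 2 * s) r
            - r * (r + 1) / 2))) := by
    rw [show ∀ z : ℚ, ((q : ℚ) - 1) ^ 2 * (eta q r n s * 6 * z) =
      6 * ((((q : ℚ) - 1) ^ 2 * eta q r n s) * z) from fun z => by ring, hA]
    have hu := one_sub_inv_pow q r hq2 hr
    have hcc : 2 ≤ Nat.choose (r + n - s - 1) (r - 1) := by
      have h1 : Nat.choose r (r - 1) ≤ Nat.choose (r + n - s - 1) (r - 1) :=
        Nat.choose_le_choose _ (by omega)
      rw [Nat.choose_symm (by omega : 1 ≤ r), Nat.choose_one_right] at h1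
      omega
    have hv := one_sub_inv_pow q _ hq2 hcc
    have huv : (1 / 2 : ℚ) ≤ (1 - ((q : ℚ)⁻¹) ^ r) *
      (1 - ((q : ℚ)⁻¹) ^ (Nat.choose (r + n - s - 1) (r - 1))) := by nlinarith
    have hpow : (q : ℚ) ^ (Nat.choose (r + (n - s)) r + r + 1) * (q : ℚ) ^
        (-((Nat.choose (r + n - s) r : ℤ) - Nat.choose (r + n - 2 * s) r
            - r * (r + 1) / 2)) = (q : ℚ) ^ D := by
      rw [← zpow_natCast, ← zpow_natCast, ← zpow_add₀ (by positivity)]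
      congr 1
      rw [hD, show r + n - s = r + (n - s) by omega, show r + n - 2 * s = r + (n - 2 * s) by omega]
      have c2' : 2 * (Nat.choose (r + 2) r : ℤ) = r * (r + 1) + 2 * (r + 1) := by exact_mod_cast c2
      have : (r : ℤ) * (r + 1) / 2 = (Nat.choose (r + 2) r : ℤ) - (r + 1) := by omega
      rw [this]
      push_cast
      ring
    have hD0 : (0 : ℚ) ≤ (q : ℚ) ^ D := by positivity
    calc 3 * (q : ℚ) ^ D = 6 * ((q : ℚ) ^ D * (1 / 2)) := by ring
      _ ≤ 6 * ((q : ℚ) ^ D * ((1 - ((q : ℚ)⁻¹) ^ r) *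
          (1 - ((q : ℚ)⁻¹) ^ (Nat.choose (r + n - s - 1) (r - 1))))) := by gcongr
      _ = _ := by rw [← hpow]; ring
  have hpos : (0 : ℚ) < ((q : ℚ) - 1) ^ 2 := by
    have : (0 : ℚ) < (q : ℚ) - 1 := by linarith
    positivity
  refine le_of_mul_le_mul_left ?_ hpos
  refine le_trans ?_ hE
  rw [← abs_of_pos hpos, ← abs_mul, abs_le, hB]
  have hlow' : (N 1 : ℚ) * N (n - s) ≤ Qcount F r n s + N 1 * (N 1 * N (n - 2 * s)) := by
    exact_mod_cast hlow
  have hDpos : (0 : ℚ) < (q : ℚ) ^ D := by positivity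
  constructor
  · have b1 := hNle 1
    have b2 := hNle (n - 2 * s)
    rw [c1] at b1
    have b3 : (N 1 : ℚ) ≤ 2 * q ^ r := by
      have hx : (0 : ℚ) ≤ N 1 := by positivity
      rw [pow_succ] at b1
      have : (q : ℚ) * N 1 ≤ q * (2 * q ^ r) := by nlinarith
      exact le_of_mul_le_mul_left this (by linarith)
    have hq1 : (0 : ℚ) ≤ (q : ℚ) - 1 := by linarith
    have b4 : ((q : ℚ) - 1) ^ 2 * (N 1 * (N 1 * N (n - 2 * s))) ≤ 2 * (q : ℚ) ^ D := by
      calc ((q : ℚ) - 1) ^ 2 * (N 1 * (N 1 * N (n - 2 * s)))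
          = (((q : ℚ) - 1) * N 1) * N 1 * (((q : ℚ) - 1) * N (n - 2 * s)) := by ring
        _ ≤ q ^ (r + 1) * (2 * q ^ r) * q ^ (Nat.choose (r + (n - 2 * s)) r) := by
            gcongr
        _ = 2 * (q : ℚ) ^ (r + 1 + r + Nat.choose (r + (n - 2 * s)) r) := by
            rw [pow_add, pow_add]; ring
        _ ≤ 2 * (q : ℚ) ^ D := by
            have : r + 1 + r + Nat.choose (r + (n - 2 * s)) r ≤ D := by
              rw [hD]
              have : 2 * r ≤ r * (r + 1) := by nlinarith
              omega
            have h1 : (1 : ℚ) ≤ q := by linarith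
            gcongr
    have := mul_le_mul_of_nonneg_left hlow' hpos.le
    linarith
  · have hsum : ∑ k ∈ Finset.Icc 1 (n / s), N k * N (n - s * k) =
        N 1 * N (n - s) + ∑ k ∈ Finset.Icc 2 (n / s), N k * N (n - s * k) := by
      have h1 : 1 ≤ n / s := by
        rw [Nat.le_div_iff_mul_le (by omega)]; omega
      rw [← Finset.add_sum_Ioc_eq_sum_Icc h1, mul_one]
      rfl
    rw [hsum] at hup
    have hup' : (Qcount F r n s : ℚ) ≤ N 1 * N (n - s) +
        ∑ k ∈ Finset.Icc 2 (n / s), (N k : ℚ) * N (n - s * k) := by exact_mod_cast hup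
    have hterm : ∀ k ∈ Finset.Icc 2 (n / s), ((q : ℚ) - 1) ^ 2 * ((N k : ℚ) * N (n - s * k)) ≤
        (q : ℚ) ^ D * (1 / 2) ^ (k - 2) := by
      intro k hk
      rw [Finset.mem_Icc, Nat.le_div_iff_mul_le (by omega)] at hk
      have hx := exponent_bound r s n k hr hs hn hns hk.1 (by rw [mul_comm]; exact hk.2)
      have hq1 : (0 : ℚ) ≤ (q : ℚ) - 1 := by linarith
      have h1 : (1 : ℚ) ≤ q := by linarith
      have hy : (q : ℚ) ^ (Nat.choose (r + k) r + Nat.choose (r + (n - s * k)) r) * 2 ^ (k - 2) ≤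
          (q : ℚ) ^ D := by
        calc _ ≤ (q : ℚ) ^ (Nat.choose (r + k) r + Nat.choose (r + (n - s * k)) r) *
              (q : ℚ) ^ (k - 2) := by gcongr
          _ = (q : ℚ) ^ (Nat.choose (r + k) r + Nat.choose (r + (n - s * k)) r + (k - 2)) := by
              rw [← pow_add]
          _ ≤ _ := pow_le_pow_right₀ h1 (by omega)
      rw [one_div, inv_pow, ← div_eq_mul_inv, le_div_iff₀ (by positivity)]
      refine le_trans ?_ hy
      gcongr
      calc ((q : ℚ) - 1) ^ 2 * ((N k : ℚ) * N (n - s * k))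
          = (((q : ℚ) - 1) * N k) * (((q : ℚ) - 1) * N (n - s * k)) := by ring
        _ ≤ q ^ (Nat.choose (r + k) r) * q ^ (Nat.choose (r + (n - s * k)) r) := by
            have := hNle k
            have := hNle (n - s * k)
            gcongr
        _ = _ := by rw [pow_add]
    have hS := Finset.sum_le_sum hterm
    rw [← Finset.mul_sum, ← Finset.mul_sum] at hS
    have hg := mul_le_mul_of_nonneg_left (geom_bound (n / s)) hDpos.le
    have := mul_le_mul_of_nonneg_left hup' hpos.le
    linarith
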